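/- Every 3-degenerate finite simple graph G on n vertices satisfies α_1(G) ≥ n/2; that is, G has an induced forest on at least half of its vertices. -/

import Mathlib

/-- The subgraph of `G` induced on `A` is `d`-degenerate: every nonempty (finite)
subset of `A` contains a vertex with at most `d` neighbours inside that subset. -/
def DegenOn {V : Type*} (G : SimpleGraph V) (d : ℕ) (A : Set V) : Prop :=
  ∀ S : Set V, S ⊆ A → S.Finite → S.Nonempty → ∃ v ∈ S, (S ∩ G.neighborSet v).ncard ≤ d

/-- `G` is `d`-degenerate. -/
def Degen {V : Type*} (G : SimpleGraph V) (d : ℕ) : Prop :=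
  DegenOn G d Set.univ

/-- `α_d(G)`: the maximum number of vertices of an induced `d`-degenerate subgraph of `G`. -/
noncomputable def alphaDeg {V : Type*} [Fintype V] (G : SimpleGraph V) (d : ℕ) : ℕ :=
  sSup {m : ℕ | ∃ A : Set V, DegenOn G d A ∧ A.ncard = m}

/-!
Build the graph by adding vertices in a degeneracy order, so that each new vertex has at most `n`
neighbours among the earlier ones, and colour greedily. Colour `i` accepts the new vertex as long as
at most `d i` of these neighbours have colour `i`, and by pigeonhole some colour does so as soon as
`n < ∑ i, (d i + 1)`. Each colour class then induces a `d i`-degenerate subgraph. Two colours with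
`d = 1` absorb `n = 3`, and the larger class is the required forest.
-/

section Degeneracy

variable {V ι : Type*} {G : SimpleGraph V} {n k : ℕ} {A B S : Set V} {v : V}

theorem degenOn_empty : DegenOn G k ∅ :=
  fun _ hT _ hne => (hne.ne_empty (Set.subset_empty_iff.1 hT)).elim

theorem DegenOn.mono (hB : DegenOn G k B) (hAB : A ⊆ B) : DegenOn G k A :=
  fun T hT => hB T (hT.trans hAB)

protected theorem DegenOn.insert (hA : DegenOn G k A) (hfin : (A ∩ G.neighborSet v).Finite)
    (hv : (A ∩ G.neighborSet v).ncard ≤ k) : DegenOn G k (insert v A) := by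
  intro T hT hTfin hTne
  by_cases hvT : v ∈ T
  · have hsub : T ∩ G.neighborSet v ⊆ A ∩ G.neighborSet v := fun x ⟨hxT, hadj⟩ =>
      ⟨(hT hxT).resolve_left (G.ne_of_adj hadj).symm, hadj⟩
    exact ⟨v, hvT, (Set.ncard_le_ncard hsub hfin).trans hv⟩
  · exact hA T ((Set.subset_insert_iff_of_notMem hvT).1 hT) hTfin hTne

@[elab_as_elim]
theorem DegenOn.induction_on {motive : Set V → Prop} (hS : DegenOn G k S) (hfin : S.Finite)
    (empty : motive ∅)
    (insert : ∀ v A, A.Finite → v ∉ A → (A ∩ G.neighborSet v).ncard ≤ k →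
      motive A → motive (insert v A)) :
    motive S := by
  induction hcard : S.ncard generalizing S with
  | zero => rwa [(Set.ncard_eq_zero hfin).1 hcard]
  | succ m ih =>
    have hne : S.Nonempty := Set.nonempty_of_ncard_ne_zero (by omega)
    obtain ⟨v, hvS, hv⟩ := hS S subset_rfl hfin hne
    have hsub : S \ {v} ⊆ S := Set.sdiff_subset
    have hnbr : ((S \ {v}) ∩ G.neighborSet v).ncard ≤ k :=
      (Set.ncard_le_ncard (Set.inter_subset_inter_left _ hsub) (hfin.inter_of_left _)).trans hv
    have hm : (S \ {v}).ncard = m := by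
      rw [Set.ncard_sdiff_singleton_of_mem hvS, hcard, Nat.add_sub_cancel]
    rw [← Set.insert_sdiff_self_of_mem hvS]
    exact insert v _ (hfin.subset hsub) (by simp) hnbr (ih (hS.mono hsub) (hfin.subset hsub) hm)

theorem DegenOn.ncard_le_alphaDeg [Fintype V] (hA : DegenOn G k A) : A.ncard ≤ alphaDeg G k :=
  le_csSup ⟨Nat.card V, by rintro _ ⟨B, -, rfl⟩; exact Set.ncard_le_card B⟩ ⟨A, hA, rfl⟩

section Coloring

variable [Fintype ι] {d : ι → ℕ}

theorem ncard_eq_sum_ncard_inter_preimage (hS : S.Finite) (c : V → ι) :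
    S.ncard = ∑ i, (S ∩ c ⁻¹' {i}).ncard := by
  classical
  lift S to Finset V using hS
  rw [Set.ncard_coe_finset, Finset.card_eq_sum_card_fiberwise (f := c) (t := Finset.univ) (by simp)]
  refine Finset.sum_congr rfl fun i _ => ?_
  rw [← Set.ncard_coe_finset, Finset.coe_filter]
  rfl

theorem exists_ncard_inter_preimage_le (hS : S.Finite) (c : V → ι)
    (hcard : S.ncard < ∑ i, (d i + 1)) : ∃ i, (S ∩ c ⁻¹' {i}).ncard ≤ d i := by
  rw [ncard_eq_sum_ncard_inter_preimage hS c] at hcard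
  obtain ⟨i, -, hi⟩ := Finset.exists_lt_of_sum_lt hcard
  exact ⟨i, Nat.lt_succ_iff.1 hi⟩

theorem DegenOn.exists_coloring (hS : DegenOn G n S) (hfin : S.Finite)
    (hn : n < ∑ i, (d i + 1)) : ∃ c : V → ι, ∀ i, DegenOn G (d i) (S ∩ c ⁻¹' {i}) := by
  classical
  refine hS.induction_on hfin ?empty fun v A hA _ hv ⟨c, hc⟩ => ?insert
  case empty =>
    obtain ⟨i, -, -⟩ := Finset.exists_ne_zero_of_sum_ne_zero (Nat.ne_zero_of_lt hn)
    exact ⟨fun _ => i, fun j => by simpa only [Set.empty_inter] using degenOn_empty⟩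
  case insert =>
    obtain ⟨i, hi⟩ := exists_ncard_inter_preimage_le (hA.inter_of_left _) c (hv.trans_lt hn)
    rw [Set.inter_right_comm] at hi
    refine ⟨Function.update c v i, fun j => ?_⟩
    by_cases hji : j = i
    · subst hji
      have hclass : insert v A ∩ Function.update c v j ⁻¹' {j} ⊆ insert v (A ∩ c ⁻¹' {j}) := by
        grind
      exact ((hc j).insert ((hA.inter_of_left _).inter_of_left _) hi).mono hclass
    · have hclass : insert v A ∩ Function.update c v i ⁻¹' {j} ⊆ A ∩ c ⁻¹' {j} := by
        grind
      exact (hc j).mono hclass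

end Coloring

end Degeneracy

theorem stmt_5_general {V ι : Type*} [Fintype V] [Fintype ι] (G : SimpleGraph V) (d : ι → ℕ)
    {n : ℕ} (hG : Degen G n) (hn : n < ∑ i, (d i + 1)) :
    Fintype.card V ≤ ∑ i, alphaDeg G (d i) := by
  obtain ⟨c, hc⟩ := DegenOn.exists_coloring hG Set.finite_univ hn
  calc Fintype.card V = ∑ i, (Set.univ ∩ c ⁻¹' {i}).ncard := by
        rw [← ncard_eq_sum_ncard_inter_preimage Set.finite_univ c, Set.ncard_univ,
          Nat.card_eq_fintype_card]
    _ ≤ ∑ i, alphaDeg G (d i) := Finset.sum_le_sum fun i _ => (hc i).ncard_le_alphaDeg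

theorem stmt_5 {V : Type*} [Fintype V] (G : SimpleGraph V) (hG : Degen G 3) :
    Fintype.card V ≤ 2 * alphaDeg G 1 := by
  simpa using stmt_5_general G (fun _ : Fin 2 => 1) hG (by simp)
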